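/- arXiv:2510.04099 — 2 statements merged into one kernel-verified Lean document; each statement's English description precedes it below -/
import Mathlib

section
/- Let m ≥ 3 be an integer with an odd factor, let ζ = e^{iπ/m}, and let ε = (ε_1,…,ε_m) ∈ {±1}^m satisfy ∑_{j=1}^m ε_j·ζ^j = 0. Set e_j = ε_j·(cos(jπ/m), sin(jπ/m)) for j = 1,…,m. Then (e_1,…,e_m) is an edge family of size m (the vectors are nonzero with pairwise distinct directions and sum to zero), and it is optimal: r(e) = 1/(2m·sin(π/(2m))) and r(e) ≤ r(e') for every edge family e' of size m. -/
noncomputable section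

open Real
open scoped RealInnerProductSpace ENNReal

/-- ℝ² as a Euclidean space. -/
abbrev E2 : Type := EuclideanSpace ℝ (Fin 2)

/-- The vector `(x, y)` in ℝ². -/
def vec2 (x y : ℝ) : E2 := (WithLp.equiv 2 (Fin 2 → ℝ)).symm ![x, y]

/-- The coordinates of a vector in ℝ². -/
def toFun2 (v : E2) : Fin 2 → ℝ := WithLp.equiv 2 (Fin 2 → ℝ) v

/-- The phaseless measurement map `Φ_A(x) = (|⟨a_j, x⟩|)_j`. -/
def PhiMap {m : ℕ} (a : Fin m → E2) (x : E2) : EuclideanSpace ℝ (Fin m) :=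
  (WithLp.equiv 2 (Fin m → ℝ)).symm fun j => |⟪a j, x⟫|

/-- The distance `dist(x,y) = min ‖x − y‖ ‖x + y‖` (real phase retrieval distance). -/
def pdist (x y : E2) : ℝ := min ‖x - y‖ ‖x + y‖

/-- The set of Lipschitz ratios of the phaseless measurement map. -/
def ratioSet {m : ℕ} (a : Fin m → E2) : Set ℝ :=
  {r | ∃ x y : E2, pdist x y ≠ 0 ∧ r = ‖PhiMap a x - PhiMap a y‖ / pdist x y}

/-- The optimal lower Lipschitz constant `L_A`. -/
def lipL {m : ℕ} (a : Fin m → E2) : ℝ := sInf (ratioSet a)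

/-- The optimal upper Lipschitz constant `U_A`. -/
def lipU {m : ℕ} (a : Fin m → E2) : ℝ := sSup (ratioSet a)

/-- The condition number `β_A = U_A / L_A`, with `β_A = +∞` when `L_A = 0`. -/
def condNum {m : ℕ} (a : Fin m → E2) : ℝ≥0∞ :=
  if lipL a = 0 then ⊤ else ENNReal.ofReal (lipU a / lipL a)

/-- An edge family: nonzero vectors with pairwise distinct directions summing to zero
(the edge vectors of a strictly convex polygon). -/
def IsEdgeFamily {m : ℕ} (e : Fin m → E2) : Prop :=
  (∀ j, e j ≠ 0) ∧
  (∀ i j : Fin m, i ≠ j → ‖e i‖⁻¹ • e i ≠ ‖e j‖⁻¹ • e j) ∧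
  ∑ j, e j = 0

/-- The diameter-to-perimeter ratio of the polygon with edge vectors `e`. -/
def rRatio {m : ℕ} (e : Fin m → E2) : ℝ :=
  sSup {s | ∃ u : E2, ‖u‖ = 1 ∧ s = ∑ j, |⟪e j, u⟫|} / (2 * ∑ j, ‖e j‖)

/-- An optimal edge family: minimizes `rRatio` among all edge families of size `m`. -/
def IsOptimalEdgeFamily {m : ℕ} (e : Fin m → E2) : Prop :=
  IsEdgeFamily e ∧ ∀ e' : Fin m → E2, IsEdgeFamily e' → rRatio e ≤ rRatio e'

/-- The complex square map on ℝ² ≅ ℂ: `f(t·(cos φ, sin φ)) = t²·(cos 2φ, sin 2φ)`. -/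
def csq (v : E2) : E2 :=
  vec2 (toFun2 v 0 ^ 2 - toFun2 v 1 ^ 2) (2 * toFun2 v 0 * toFun2 v 1)

/-- The harmonic frame `E_m`: the `j`-th row is `(cos((j−1)π/m), sin((j−1)π/m))`, `j = 1,…,m`. -/
def harmonicFrame (m : ℕ) : Fin m → E2 :=
  fun j => vec2 (Real.cos ((j : ℕ) * π / m)) (Real.sin ((j : ℕ) * π / m))

/-!
Let `D` be the supremum of `∑ j, |⟪e j, u⟫|` over unit vectors `u`. Write `e j = c j • t j` with
unit vectors `t 0, …, t (m - 1)` on a half circle, sorted by angle, and close the chain by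
`t m = -t 0`. Along this chain the functional `⟪t j, ·⟫` has variation at least `2`, whence
`2 ∑ j, |c j| ≤ ∑ j, ∑ k, |⟪e j, t (k + 1) - t k⟫| ≤ D ∑ k, ‖t (k + 1) - t k‖`. By concavity of the
sine, the chain has length at most `2 m sin (π / (2 m))`, which gives the lower bound for the ratio.

For the signed harmonic family, `2 sin (π / (2 m)) |cos a|` is the absolute increment of the sine
over the interval of length `π / m` centred at `a`. Summing over `m` adjacent intervals gives at
most the variation of the sine over a half period, which is `2`; hence the bound is attained.
-/

section TwiceDiam

variable {ι E : Type*} [Fintype ι] [NormedAddCommGroup E] [InnerProductSpace ℝ E]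

/-- The numerator of `rRatio`. If `e` lists the edges of a convex polygon, then `∑ j, |⟪e j, u⟫|` is
twice the width of the polygon in the direction `u`, so that this is twice its diameter. -/
def twiceDiam (e : ι → E) : ℝ := sSup {s | ∃ u : E, ‖u‖ = 1 ∧ s = ∑ j, |⟪e j, u⟫|}

theorem twiceDiam_nonneg (e : ι → E) : 0 ≤ twiceDiam e := by
  refine Real.sSup_nonneg ?_
  rintro _ ⟨u, -, rfl⟩
  positivity

theorem sum_abs_inner_le_twiceDiam (e : ι → E) {u : E} (hu : ‖u‖ = 1) :
    ∑ j, |⟪e j, u⟫| ≤ twiceDiam e := by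
  refine le_csSup ⟨∑ j, ‖e j‖, ?_⟩ ⟨u, hu, rfl⟩
  rintro _ ⟨w, hw, rfl⟩
  gcongr with j
  simpa only [hw, mul_one] using abs_real_inner_le_norm (e j) w

theorem sum_abs_inner_le_twiceDiam_mul_norm (e : ι → E) (w : E) :
    ∑ j, |⟪e j, w⟫| ≤ twiceDiam e * ‖w‖ := by
  rcases eq_or_ne w 0 with rfl | hw
  · simp
  have hnorm : 0 < ‖w‖ := norm_pos_iff.2 hw
  have hunit := sum_abs_inner_le_twiceDiam e (norm_smul_inv_norm (𝕜 := ℝ) hw)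
  simp only [real_inner_smul_right, abs_mul, ← Finset.mul_sum] at hunit
  simpa [abs_of_pos hnorm, inv_mul_le_iff₀' hnorm] using hunit

theorem twiceDiam_comp_equiv {κ : Type*} [Fintype κ] (σ : κ ≃ ι) (e : ι → E) :
    twiceDiam (e ∘ σ) = twiceDiam e := by
  have hsum (u : E) : ∑ k, |⟪(e ∘ σ) k, u⟫| = ∑ j, |⟪e j, u⟫| := σ.sum_comp fun j => |⟪e j, u⟫|
  simp only [twiceDiam, hsum]

-- Along the path, `⟪t j, ·⟫` runs from `⟪t j, t 0⟫` up to `‖t j‖ ^ 2` and down to `-⟪t j, t 0⟫`.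
theorem two_mul_norm_sq_le_sum_abs_inner_sub {m : ℕ} {t : ℕ → E} (ht : t m = -t 0) {j : ℕ}
    (hj : j ≤ m) :
    2 * ‖t j‖ ^ 2 ≤ ∑ k ∈ Finset.range m, |⟪t j, t (k + 1) - t k⟫| := by
  let f : ℕ → ℝ := fun k => ⟪t j, t k⟫
  have hstep (k : ℕ) : |⟪t j, t (k + 1) - t k⟫| = dist (f k) (f (k + 1)) := by
    rw [inner_sub_right, dist_comm, Real.dist_eq]
  have hends : f m = -f 0 := by simp only [f, ht, inner_neg_right]
  calc 2 * ‖t j‖ ^ 2 = (f j - f 0) + (f j - f m) := by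
        simp only [hends, f, real_inner_self_eq_norm_sq]; ring
    _ ≤ dist (f 0) (f j) + dist (f j) (f m) := by
        rw [dist_comm (f 0)]
        exact add_le_add (le_abs_self _) (le_abs_self _)
    _ ≤ ∑ k ∈ Finset.range j, dist (f k) (f (k + 1)) +
          ∑ k ∈ Finset.Ico j m, dist (f k) (f (k + 1)) :=
        add_le_add (dist_le_range_sum_dist f j) (dist_le_Ico_sum_dist f hj)
    _ = ∑ k ∈ Finset.range m, |⟪t j, t (k + 1) - t k⟫| := by
        simp only [hstep, Finset.sum_range_add_sum_Ico _ hj]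

theorem two_mul_sum_abs_mul_norm_sq_le {m : ℕ} {t : ℕ → E} (ht : t m = -t 0) (c : Fin m → ℝ) :
    2 * ∑ j, |c j| * ‖t j‖ ^ 2 ≤
      twiceDiam (fun j : Fin m => c j • t j) * ∑ k ∈ Finset.range m, ‖t (k + 1) - t k‖ := by
  calc 2 * ∑ j, |c j| * ‖t j‖ ^ 2 = ∑ j, |c j| * (2 * ‖t j‖ ^ 2) := by
        rw [Finset.mul_sum]
        exact Finset.sum_congr rfl fun j _ => mul_left_comm _ _ _
    _ ≤ ∑ j, |c j| * ∑ k ∈ Finset.range m, |⟪t j, t (k + 1) - t k⟫| := by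
        gcongr with j
        exact two_mul_norm_sq_le_sum_abs_inner_sub ht j.is_le'
    _ = ∑ k ∈ Finset.range m, ∑ j : Fin m, |⟪c j • t j, t (k + 1) - t k⟫| := by
        simp only [Finset.mul_sum, real_inner_smul_left, abs_mul]
        exact Finset.sum_comm
    _ ≤ ∑ k ∈ Finset.range m, twiceDiam (fun j : Fin m => c j • t j) * ‖t (k + 1) - t k‖ :=
        Finset.sum_le_sum fun k _ => sum_abs_inner_le_twiceDiam_mul_norm _ _
    _ = _ := (Finset.mul_sum ..).symm

end TwiceDiam

section UnitVec

/-- The unit vector of the plane at angle `θ` from the first coordinate axis. -/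
def unitVec (θ : ℝ) : E2 := vec2 (cos θ) (sin θ)

theorem inner_unitVec (a b : ℝ) : ⟪unitVec a, unitVec b⟫ = cos (a - b) := by
  simp only [unitVec, vec2, PiLp.inner_apply, Fin.sum_univ_two, cos_sub]
  simp [mul_comm]

theorem norm_unitVec (θ : ℝ) : ‖unitVec θ‖ = 1 := by
  rw [norm_eq_sqrt_real_inner, inner_unitVec, sub_self, cos_zero, sqrt_one]

theorem norm_smul_unitVec (c θ : ℝ) : ‖c • unitVec θ‖ = |c| := by
  rw [norm_smul, norm_unitVec, mul_one, Real.norm_eq_abs]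

theorem unitVec_add_pi (θ : ℝ) : unitVec (θ + π) = -unitVec θ := by
  ext i
  fin_cases i <;> simp [unitVec, vec2]

theorem norm_unitVec_sub (a b : ℝ) : ‖unitVec a - unitVec b‖ = 2 * |sin ((a - b) / 2)| := by
  rw [← sq_eq_sq₀ (norm_nonneg _) (by positivity), norm_sub_sq_real, inner_unitVec, norm_unitVec,
    norm_unitVec, mul_pow, sq_abs, Real.sin_sq_eq_half_sub, mul_div_cancel₀ _ two_ne_zero]
  ring

theorem unitVec_eq_repr_exp (θ : ℝ) :
    unitVec θ = Complex.orthonormalBasisOneI.repr (Complex.exp (θ * Complex.I)) := by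
  ext i
  fin_cases i <;>
    simp [unitVec, vec2, Complex.exp_ofReal_mul_I_re, Complex.exp_ofReal_mul_I_im]

theorem exists_smul_unitVec (v : E2) : ∃ c θ : ℝ, θ ∈ Set.Icc 0 π ∧ v = c • unitVec θ := by
  set z := Complex.orthonormalBasisOneI.repr.symm v
  have hv : v = ‖z‖ • unitVec z.arg := by
    rw [unitVec_eq_repr_exp, ← map_smul, Complex.real_smul, Complex.norm_mul_exp_arg_mul_I,
      LinearIsometryEquiv.apply_symm_apply]
  rcases le_or_gt 0 z.arg with harg | harg
  · exact ⟨‖z‖, z.arg, ⟨harg, z.arg_le_pi⟩, hv⟩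
  · refine ⟨-‖z‖, z.arg + π, ⟨by linarith [z.neg_pi_lt_arg], by linarith⟩, ?_⟩
    rw [unitVec_add_pi, neg_smul_neg, ← hv]

theorem smul_unitVec_ne_smul_unitVec {a b d : ℝ} (c : ℝ) (hd : d ≠ 0) (hab : sin (a - b) ≠ 0) :
    c • unitVec a ≠ d • unitVec b := by
  intro h
  have hinner : ⟪c • unitVec a, unitVec (a - π / 2)⟫ = ⟪d • unitVec b, unitVec (a - π / 2)⟫ := by
    rw [h]
  rw [real_inner_smul_left, real_inner_smul_left, inner_unitVec, inner_unitVec, sub_sub_cancel,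
    cos_pi_div_two, mul_zero, ← cos_neg, show -(b - (a - π / 2)) = a - b - π / 2 by ring,
    cos_sub_pi_div_two] at hinner
  exact mul_ne_zero hd hab hinner.symm

end UnitVec

section LowerBound

theorem sin_pi_div_two_mul_pos {m : ℕ} (hm : 0 < m) : 0 < sin (π / (2 * m)) := by
  have hm' : (1 : ℝ) ≤ m := by exact_mod_cast hm
  refine sin_pos_of_pos_of_lt_pi (by positivity) (div_lt_self pi_pos ?_)
  linarith

theorem sum_sin_le_card_mul_sin_average {ι : Type*} (s : Finset ι) {x : ι → ℝ}
    (hx : ∀ i ∈ s, x i ∈ Set.Icc 0 π) :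
    ∑ i ∈ s, sin (x i) ≤ s.card * sin ((∑ i ∈ s, x i) / s.card) := by
  rcases s.eq_empty_or_nonempty with rfl | hs
  · simp
  have hcard : (0 : ℝ) < s.card := by exact_mod_cast hs.card_pos
  have hJensen := strictConcaveOn_sin_Icc.concaveOn.le_map_sum (t := s)
    (w := fun _ => (s.card : ℝ)⁻¹) (fun _ _ => by positivity) (by simp [hcard.ne']) hx
  simp only [smul_eq_mul, ← Finset.mul_sum] at hJensen
  rwa [inv_mul_le_iff₀ hcard, inv_mul_eq_div] at hJensen

theorem sum_norm_unitVec_sub_le {m : ℕ} {θ : ℕ → ℝ} (hθ : Monotone θ)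
    (hspan : θ m - θ 0 ≤ 2 * π) :
    ∑ k ∈ Finset.range m, ‖unitVec (θ (k + 1)) - unitVec (θ k)‖ ≤
      2 * (m * sin ((θ m - θ 0) / (2 * m))) := by
  have hmem : ∀ k ∈ Finset.range m, (θ (k + 1) - θ k) / 2 ∈ Set.Icc 0 π := by
    intro k hk
    have hfirst : θ 0 ≤ θ k := hθ k.zero_le
    have hlast : θ (k + 1) ≤ θ m := hθ (Finset.mem_range.1 hk)
    constructor <;> linarith [hθ k.le_succ]
  calc ∑ k ∈ Finset.range m, ‖unitVec (θ (k + 1)) - unitVec (θ k)‖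
      = ∑ k ∈ Finset.range m, 2 * sin ((θ (k + 1) - θ k) / 2) :=
        Finset.sum_congr rfl fun k hk => by
          rw [norm_unitVec_sub, abs_of_nonneg (sin_nonneg_of_mem_Icc (hmem k hk))]
    _ ≤ 2 * (m * sin ((∑ k ∈ Finset.range m, (θ (k + 1) - θ k) / 2) / m)) := by
        rw [← Finset.mul_sum]
        gcongr
        simpa only [Finset.card_range] using sum_sin_le_card_mul_sin_average _ hmem
    _ = 2 * (m * sin ((θ m - θ 0) / (2 * m))) := by
        rw [← Finset.sum_div, Finset.sum_range_sub, div_div]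

theorem sum_norm_smul_unitVec_le {m : ℕ} {θ : ℕ → ℝ} (hθ : Monotone θ) (hend : θ m = θ 0 + π)
    (c : Fin m → ℝ) :
    ∑ j : Fin m, ‖c j • unitVec (θ j)‖ ≤
      twiceDiam (fun j : Fin m => c j • unitVec (θ j)) * (m * sin (π / (2 * m))) := by
  have hspan : θ m - θ 0 = π := by rw [hend, add_sub_cancel_left]
  have hpath : unitVec (θ m) = -unitVec (θ 0) := by rw [hend, unitVec_add_pi]
  have hchords := sum_norm_unitVec_sub_le hθ (by linarith [pi_pos] : θ m - θ 0 ≤ 2 * π)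
  have hlength := two_mul_sum_abs_mul_norm_sq_le (t := fun k => unitVec (θ k)) hpath c
  simp only [norm_unitVec, one_pow, mul_one] at hlength
  rw [hspan] at hchords
  simp only [norm_smul_unitVec]
  linarith [mul_le_mul_of_nonneg_left hchords
    (twiceDiam_nonneg fun j : Fin m => c j • unitVec (θ j))]

theorem exists_monotone_extension_of_le {α : Type*} [Preorder α] {n : ℕ} {φ : Fin n → α}
    (hφ : Monotone φ) {b : α} (hb : ∀ i, φ i ≤ b) :
    ∃ θ : ℕ → α, Monotone θ ∧ (∀ i : Fin n, θ i = φ i) ∧ θ n = b := by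
  refine ⟨fun k => if h : k < n then φ ⟨k, h⟩ else b, monotone_nat_of_le_succ fun k => ?_,
    fun i => dif_pos i.2, dif_neg n.lt_irrefl⟩
  by_cases hsucc : k + 1 < n
  · simpa only [dif_pos hsucc, dif_pos (k.lt_succ_self.trans hsucc)] using
      hφ (Fin.mk_le_mk.2 k.le_succ)
  · rw [dif_neg hsucc]
    split_ifs
    exacts [hb _, le_rfl]

theorem sum_norm_le_twiceDiam_mul {m : ℕ} (e : Fin m → E2) :
    ∑ j, ‖e j‖ ≤ twiceDiam e * (m * sin (π / (2 * m))) := by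
  rcases m.eq_zero_or_pos with rfl | hm
  · simp
  choose c φ hφ he using fun j => exists_smul_unitVec (e j)
  let σ := Tuple.sort φ
  have hle (j : Fin m) : φ (σ j) ≤ φ (σ ⟨0, hm⟩) + π := by
    linarith [(hφ (σ j)).2, (hφ (σ ⟨0, hm⟩)).1]
  obtain ⟨θ, hmono, hθ, hend⟩ := exists_monotone_extension_of_le (Tuple.monotone_sort φ) hle
  have hsorted : (fun j : Fin m => c (σ j) • unitVec (θ j)) = e ∘ σ := by
    funext j
    rw [hθ, Function.comp_apply, Function.comp_apply, he (σ j)]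
  have hend' : θ m = θ 0 + π := hend.trans (congrArg (· + π) (hθ ⟨0, hm⟩).symm)
  calc ∑ j, ‖e j‖ = ∑ j, ‖(e ∘ σ) j‖ := (Equiv.sum_comp σ fun j => ‖e j‖).symm
    _ ≤ twiceDiam (e ∘ σ) * (m * sin (π / (2 * m))) := by
        rw [← hsorted]
        exact sum_norm_smul_unitVec_le hmono hend' (c ∘ σ)
    _ = twiceDiam e * (m * sin (π / (2 * m))) := by rw [twiceDiam_comp_equiv]

theorem one_div_le_rRatio {m : ℕ} {e : Fin m → E2} (he : e ≠ 0) :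
    1 / (2 * m * sin (π / (2 * m))) ≤ rRatio e := by
  obtain ⟨i, hi⟩ := Function.ne_iff.1 he
  have hsin := sin_pi_div_two_mul_pos i.pos
  have hm : (0 : ℝ) < m := by exact_mod_cast i.pos
  have hsum : 0 < ∑ j, ‖e j‖ :=
    Finset.sum_pos' (fun j _ => norm_nonneg _) ⟨i, Finset.mem_univ i, norm_pos_iff.2 hi⟩
  change _ ≤ twiceDiam e / _
  rw [div_le_div_iff₀ (by positivity) (by positivity)]
  linarith [sum_norm_le_twiceDiam_mul e]

end LowerBound

section SignedHarmonicFamily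

theorem integral_abs_cos_add_pi (a : ℝ) : ∫ x in a..a + π, |cos x| = 2 := by
  have hperiodic : Function.Periodic (fun x => |cos x|) π := fun x => by
    simp only [cos_add_pi, abs_neg]
  have hcos : ∀ x ∈ Set.uIcc (-(π / 2)) (π / 2), |cos x| = cos x := fun x hx => by
    rw [Set.uIcc_of_le (by linarith [pi_pos])] at hx
    exact abs_of_nonneg (cos_nonneg_of_mem_Icc hx)
  rw [hperiodic.intervalIntegral_add_eq a (-(π / 2)), show -(π / 2) + π = π / 2 by ring,
    intervalIntegral.integral_congr hcos, integral_cos, sin_neg, sin_pi_div_two]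
  norm_num

theorem sum_abs_sin_sub_sin_le_two {m : ℕ} {y : ℕ → ℝ} (hy : Monotone y) (hend : y m = y 0 + π) :
    ∑ k ∈ Finset.range m, |sin (y (k + 1)) - sin (y k)| ≤ 2 := by
  calc ∑ k ∈ Finset.range m, |sin (y (k + 1)) - sin (y k)|
      ≤ ∑ k ∈ Finset.range m, ∫ x in y k..y (k + 1), |cos x| := by
        gcongr with k
        rw [← integral_cos]
        exact intervalIntegral.abs_integral_le_integral_abs (hy k.le_succ)
    _ = ∫ x in y 0..y m, |cos x| :=
        intervalIntegral.sum_integral_adjacent_intervals fun _ _ =>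
          continuous_cos.abs.intervalIntegrable _ _
    _ = 2 := by rw [hend, integral_abs_cos_add_pi]

theorem sum_abs_cos_mul_sin_le_one {m : ℕ} (hm : 0 < m) (x : ℝ) :
    (∑ j ∈ Finset.range m, |cos ((j + 1) * π / m - x)|) * sin (π / (2 * m)) ≤ 1 := by
  let y : ℕ → ℝ := fun k => π / (2 * m) - x + k * (π / m)
  have hy : Monotone y := fun k l hkl => by
    have : (k : ℝ) ≤ l := by exact_mod_cast hkl
    dsimp only [y]
    gcongr
  have hend : y m = y 0 + π := by simp only [y]; field_simp; simp
  have hterm (j : ℕ) : |sin (y (j + 1)) - sin (y j)| =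
      2 * (|cos ((j + 1) * π / m - x)| * sin (π / (2 * m))) := by
    have hhalf : (y (j + 1) - y j) / 2 = π / (2 * m) := by
      simp only [y]; push_cast; ring
    have hmid : (y (j + 1) + y j) / 2 = (j + 1) * π / m - x := by
      simp only [y]; push_cast; ring
    rw [sin_sub_sin, hhalf, hmid, abs_mul, abs_mul, abs_two,
      abs_of_pos (sin_pi_div_two_mul_pos hm)]
    ring
  have hvariation := sum_abs_sin_sub_sin_le_two hy hend
  simp only [hterm, ← Finset.mul_sum, ← Finset.sum_mul] at hvariation
  linarith

/-- The family of the vectors `ε_j (cos (jπ/m), sin (jπ/m))` for `j = 1, …, m`. The angle is shifted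
by one because `Fin m` is indexed from `0`. -/
def signedHarmonicFamily {m : ℕ} (ε : Fin m → ℝ) : Fin m → E2 :=
  fun j => ε j • unitVec (((j : ℕ) + 1) * π / m)

variable {m : ℕ} {ε : Fin m → ℝ}

theorem norm_signedHarmonicFamily (hε : ∀ j, |ε j| = 1) (j : Fin m) :
    ‖signedHarmonicFamily ε j‖ = 1 := by
  rw [signedHarmonicFamily, norm_smul_unitVec, hε]

theorem twiceDiam_signedHarmonicFamily_le (hm : 0 < m) (hε : ∀ j, |ε j| = 1) :
    twiceDiam (signedHarmonicFamily ε) ≤ 1 / sin (π / (2 * m)) := by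
  refine csSup_le ⟨_, unitVec 0, norm_unitVec 0, rfl⟩ ?_
  rintro _ ⟨u, hu, rfl⟩
  obtain ⟨c, ψ, -, rfl⟩ := exists_smul_unitVec u
  rw [norm_smul_unitVec] at hu
  rw [le_div_iff₀ (sin_pi_div_two_mul_pos hm)]
  simpa only [signedHarmonicFamily, real_inner_smul_left, real_inner_smul_right, inner_unitVec,
    abs_mul, hu, hε, one_mul, Finset.sum_range] using sum_abs_cos_mul_sin_le_one hm ψ

theorem rRatio_signedHarmonicFamily (hm : 0 < m) (hε : ∀ j, |ε j| = 1) :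
    rRatio (signedHarmonicFamily ε) = 1 / (2 * m * sin (π / (2 * m))) := by
  have hne : signedHarmonicFamily ε ≠ 0 := fun h => by
    simpa [h] using norm_signedHarmonicFamily hε ⟨0, hm⟩
  refine le_antisymm ?_ (one_div_le_rRatio hne)
  have hperimeter : ∑ j, ‖signedHarmonicFamily ε j‖ = m := by
    simp [norm_signedHarmonicFamily hε]
  calc rRatio (signedHarmonicFamily ε) = twiceDiam (signedHarmonicFamily ε) / (2 * m) := by
        rw [rRatio, hperimeter, twiceDiam]
    _ ≤ 1 / sin (π / (2 * m)) / (2 * m) := by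
        gcongr
        exact twiceDiam_signedHarmonicFamily_le hm hε
    _ = 1 / (2 * m * sin (π / (2 * m))) := by rw [div_div, mul_comm (sin _)]

theorem injective_signedHarmonicFamily (hε : ∀ j, ε j ≠ 0) :
    Function.Injective (signedHarmonicFamily ε) := by
  intro i j h
  by_contra hij
  refine smul_unitVec_ne_smul_unitVec _ (hε j) ?_ h
  have hm : (0 : ℝ) < m := by exact_mod_cast i.pos
  have hi : (i : ℝ) < m := by exact_mod_cast i.2
  have hj : (j : ℝ) < m := by exact_mod_cast j.2
  have hlower : -1 < ((i : ℝ) - j) / m := by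
    rw [lt_div_iff₀ hm]
    linarith [(i : ℕ).cast_nonneg (α := ℝ)]
  have hupper : ((i : ℝ) - j) / m < 1 := by
    rw [div_lt_one hm]
    linarith [(j : ℕ).cast_nonneg (α := ℝ)]
  have hne : ((i : ℝ) - j) / m ≠ 0 :=
    div_ne_zero (sub_ne_zero.2 fun heq => hij (Fin.ext (Nat.cast_injective heq))) hm.ne'
  have hangle : ((i : ℝ) + 1) * π / m - (j + 1) * π / m = (i - j) / m * π := by ring
  rw [hangle, Ne, sin_eq_zero_iff_of_lt_of_lt (by nlinarith [pi_pos]) (by nlinarith [pi_pos])]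
  exact mul_ne_zero hne pi_ne_zero

theorem sum_signedHarmonicFamily (ε : Fin m → ℝ) :
    ∑ j, signedHarmonicFamily ε j = Complex.orthonormalBasisOneI.repr
      (∑ j : Fin m, (ε j : ℂ) * Complex.exp (π * Complex.I / m) ^ ((j : ℕ) + 1)) := by
  rw [map_sum]
  refine Finset.sum_congr rfl fun j _ => ?_
  rw [signedHarmonicFamily, unitVec_eq_repr_exp, ← map_smul, Complex.real_smul,
    ← Complex.exp_nat_mul]
  congr 3
  push_cast
  ring

theorem isEdgeFamily_signedHarmonicFamily (hε : ∀ j, |ε j| = 1)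
    (hzero : ∑ j : Fin m, (ε j : ℂ) * Complex.exp (π * Complex.I / m) ^ ((j : ℕ) + 1) = 0) :
    IsEdgeFamily (signedHarmonicFamily ε) := by
  have hne (j : Fin m) : ε j ≠ 0 := abs_pos.1 (hε j ▸ one_pos)
  refine ⟨fun j => ?_, fun i j hij => ?_, ?_⟩
  · rw [← norm_pos_iff, norm_signedHarmonicFamily hε]
    exact one_pos
  · simpa only [norm_signedHarmonicFamily hε, inv_one, one_smul] using
      (injective_signedHarmonicFamily hne).ne hij
  · rw [sum_signedHarmonicFamily, hzero, map_zero]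

end SignedHarmonicFamily

/-- If `m ≥ 3` has an odd factor, `ζ = e^{iπ/m}`, and signs
`ε ∈ {±1}^m` satisfy `∑ ε_j ζ^j = 0`, then `e_j = ε_j·(cos(jπ/m), sin(jπ/m))` is an
optimal edge family, with `r(e) = 1/(2m·sin(π/(2m)))`. -/
theorem stmt12 {m : ℕ} (hm : 3 ≤ m) (hodd : ∃ k, Odd k ∧ 1 < k ∧ k ∣ m)
    (ε : Fin m → ℝ) (hε : ∀ j, ε j = 1 ∨ ε j = -1)
    (hzero : ∑ j : Fin m, (ε j : ℂ) * Complex.exp (π * Complex.I / m) ^ ((j : ℕ) + 1) = 0)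
    (e : Fin m → E2)
    (he : ∀ j, e j = ε j • vec2 (Real.cos (((j : ℕ) + 1) * π / m))
        (Real.sin (((j : ℕ) + 1) * π / m))) :
    IsEdgeFamily e ∧
    rRatio e = 1 / (2 * m * Real.sin (π / (2 * m))) ∧
    ∀ e' : Fin m → E2, IsEdgeFamily e' → rRatio e ≤ rRatio e' := by
  have hm0 : 0 < m := by omega
  have habs (j : Fin m) : |ε j| = 1 := (abs_eq zero_le_one).2 (hε j)
  obtain rfl : e = signedHarmonicFamily ε := funext he
  have hedge := isEdgeFamily_signedHarmonicFamily habs hzero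
  have hratio := rRatio_signedHarmonicFamily hm0 habs
  refine ⟨hedge, hratio, fun e' he' => ?_⟩
  have he'0 : e' ≠ 0 := Function.ne_iff.2 ⟨⟨0, hm0⟩, he'.1 _⟩
  exact hratio ▸ one_div_le_rRatio he'0
end
end

section
/- For every integer m ≥ 3 with an odd factor, max_{θ ∈ ℝ} ∑_{j=1}^m |cos(θ − jπ/m)| = 1/sin(π/(2m)). -/
noncomputable section

open Real
open scoped RealInnerProductSpace ENNReal

/-! Rotating `θ` by `π/m` permutes the summands `|cos (θ - jπ/m)|`, because `|cos|` has period
`π`, so it suffices to let `θ` range over one period. On `[π/2, π/2 + π/m]` every cosine is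
nonnegative, and the sum of cosines in arithmetic progression equals
`cos (θ - θ₀) / sin (π/(2m))`, where `θ₀` is the midpoint of the interval. -/

theorem periodic_sum_range_sub_succ_nsmul {α β : Type*} [AddGroup α] [AddCommMonoid β]
    {f : α → β} {n : ℕ} {c : α} (hf : Function.Periodic f (n • c)) :
    Function.Periodic (fun x ↦ ∑ i ∈ Finset.range n, f (x - (i + 1) • c)) c := by
  intro x
  cases n with
  | zero => rfl
  | succ k =>
    calc ∑ i ∈ Finset.range (k + 1), f (x + c - (i + 1) • c)
        = ∑ i ∈ Finset.range (k + 1), f (x - i • c) := by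
          simp only [succ_nsmul, add_sub_add_right_eq_sub]
      _ = ∑ i ∈ Finset.range k, f (x - (i + 1) • c) + f x := by
          rw [Finset.sum_range_succ', zero_nsmul, sub_zero]
      _ = ∑ i ∈ Finset.range (k + 1), f (x - (i + 1) • c) := by
          rw [Finset.sum_range_succ, hf.sub_eq]

theorem sin_pi_div_two_mul_natCast_pos {m : ℕ} (hm : m ≠ 0) : 0 < sin (π / (2 * m)) := by
  have one_le : (1 : ℝ) ≤ m := Nat.one_le_cast.mpr (Nat.one_le_iff_ne_zero.mpr hm)
  exact sin_pos_of_pos_of_lt_pi (by positivity) (div_lt_self pi_pos (by linarith))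

/-- The sum `∑_{j=1}^m |cos (θ - jπ/m)|`, i.e. the width in direction `θ` of the zonogon whose
generators are the `m` unit vectors at angles `jπ/m`. The index is shifted so that the sum runs over
`0, …, m - 1`. -/
def absCosSum (m : ℕ) (θ : ℝ) : ℝ :=
  ∑ j ∈ Finset.range m, |cos (θ - (j + 1) * π / m)|

theorem absCosSum_periodic {m : ℕ} (hm : m ≠ 0) : Function.Periodic (absCosSum m) (π / m) := by
  have abs_cos_periodic : Function.Periodic (fun x ↦ |cos x|) (m • (π / m)) := by
    intro x
    simp only [nsmul_eq_mul, mul_div_cancel₀ π (Nat.cast_ne_zero.mpr hm), cos_add_pi, abs_neg]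
  simpa only [nsmul_eq_mul, Nat.cast_succ, ← mul_div_assoc] using!
    periodic_sum_range_sub_succ_nsmul abs_cos_periodic

theorem absCosSum_eq_sum_cos {m : ℕ} {θ : ℝ} (hθ : θ ∈ Set.Icc (π / 2) (π / 2 + π / m)) :
    absCosSum m θ = ∑ j ∈ Finset.range m, cos (θ - (j + 1) * π / m) := by
  refine Finset.sum_congr rfl fun j hj ↦ abs_of_nonneg (cos_nonneg_of_mem_Icc ⟨?_, ?_⟩)
  · have succ_le : (j : ℝ) + 1 ≤ m := by exact_mod_cast Finset.mem_range.mp hj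
    have angle_le_pi : (j + 1) * π / m ≤ π :=
      div_le_of_le_mul₀ (by positivity) pi_pos.le (by nlinarith [pi_pos])
    linarith [hθ.1]
  · have le_angle : π / m ≤ (j + 1) * π / m := by
      gcongr
      nlinarith [pi_pos, (j.cast_nonneg : (0 : ℝ) ≤ j)]
    linarith [hθ.2]

theorem sin_mul_absCosSum {m : ℕ} (hm : m ≠ 0) {θ : ℝ}
    (hθ : θ ∈ Set.Icc (π / 2) (π / 2 + π / m)) :
    sin (π / (2 * m)) * absCosSum m θ = cos (θ - (π / 2 + π / (2 * m))) := by
  have hm' : (m : ℝ) ≠ 0 := Nat.cast_ne_zero.mpr hm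
  have sum_eq := sin_mul_sum_cos m (-(π / m)) (θ - π / m)
  have half_step : -(π / m) / 2 = -(π / (2 * m)) := by ring
  have half_turn : m * -(π / m) / 2 = -(π / 2) := by field_simp
  have midpoint : (m - 1) * -(π / m) / 2 + (θ - π / m) = θ - (π / 2 + π / (2 * m)) := by
    field_simp
    ring
  have summand (j : ℕ) : -(π / m) * j + (θ - π / m) = θ - (j + 1) * π / m := by ring
  simp only [half_step, half_turn, midpoint, summand, sin_neg, sin_pi_div_two] at sum_eq
  rw [absCosSum_eq_sum_cos hθ]
  linarith

theorem isGreatest_range_absCosSum {m : ℕ} (hm : m ≠ 0) :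
    IsGreatest (Set.range (absCosSum m)) (1 / sin (π / (2 * m))) := by
  have sin_pos := sin_pi_div_two_mul_natCast_pos hm
  rw [← (absCosSum_periodic hm).image_Icc (by positivity) (π / 2)]
  constructor
  · have midpoint_mem : π / 2 + π / (2 * m) ∈ Set.Icc (π / 2) (π / 2 + π / m) :=
      ⟨le_add_of_nonneg_right (by positivity), by gcongr; linarith [m.cast_nonneg (α := ℝ)]⟩
    refine ⟨_, midpoint_mem, eq_one_div_of_mul_eq_one_right ?_⟩
    rw [sin_mul_absCosSum hm midpoint_mem, sub_self, cos_zero]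
  · rintro _ ⟨θ, hθ, rfl⟩
    rw [le_div_iff₀' sin_pos, sin_mul_absCosSum hm hθ]
    exact cos_le_one _

theorem stmt14_general {m : ℕ} (hm : m ≠ 0) :
    IsGreatest {s : ℝ | ∃ θ : ℝ, s = ∑ j : Fin m, |Real.cos (θ - ((j : ℕ) + 1) * π / m)|}
      (1 / Real.sin (π / (2 * m))) := by
  simpa only [Set.range, absCosSum, Finset.sum_range, eq_comm] using isGreatest_range_absCosSum hm

/-- For every integer `m ≥ 3` with an odd factor,
`max_{θ ∈ ℝ} ∑_{j=1}^m |cos(θ − jπ/m)| = 1/sin(π/(2m))`. -/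
theorem stmt14 {m : ℕ} (hm : 3 ≤ m) (hodd : ∃ k, Odd k ∧ 1 < k ∧ k ∣ m) :
    IsGreatest {s : ℝ | ∃ θ : ℝ, s = ∑ j : Fin m, |Real.cos (θ - ((j : ℕ) + 1) * π / m)|}
      (1 / Real.sin (π / (2 * m))) :=
  stmt14_general (by omega)
end
end
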